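/- Assume μᵢ ≥ 0 for all i. Let (𝓛, X₁,…,X_r, Y₁,…,Y_r) be a solution of the expanding Ricci soliton ODE system on [s₀, ∞) with 𝓛(s) > 0 for all s ≥ s₀. Fix an index i and a real number σᵢ > 0. Suppose that as s → ∞: 𝓛(s) → 0, Xⱼ(s) → 0 and Xⱼ(s)/𝓛(s) → 0 for every j = 1,…,r, and Yᵢ(s)/𝓛(s)² → (ε/2)σᵢ. Then (Xᵢ(s) − (ε/2)𝓛(s)²)/𝓛(s)⁴ → (ε/2)²·(μᵢσᵢ² + 1) as s → ∞. -/

import Mathlib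

open Filter Topology

/-- `(𝓛, X₁,…,X_r, Y₁,…,Y_r)` solves the expanding Ricci soliton ODE system
`𝓛' = 𝓛(∑ⱼ dⱼXⱼ² − (ε/2)𝓛²)`,
`Xᵢ' = Xᵢ(∑ⱼ dⱼXⱼ² − (ε/2)𝓛² − 1) + μᵢYᵢ² + (ε/2)𝓛²`,
`Yᵢ' = Yᵢ(∑ⱼ dⱼXⱼ² − (ε/2)𝓛² − Xᵢ)` on the set `I`. -/
def IsSolitonSol (r : ℕ) (d : Fin r → ℕ) (μ : Fin r → ℝ) (ε : ℝ)
    (L : ℝ → ℝ) (X Y : Fin r → ℝ → ℝ) (I : Set ℝ) : Prop :=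
  (∀ s ∈ I, HasDerivAt L
      (L s * (∑ j, (d j : ℝ) * X j s ^ 2 - ε / 2 * L s ^ 2)) s) ∧
  (∀ i, ∀ s ∈ I, HasDerivAt (X i)
      (X i s * (∑ j, (d j : ℝ) * X j s ^ 2 - ε / 2 * L s ^ 2 - 1)
        + μ i * Y i s ^ 2 + ε / 2 * L s ^ 2) s) ∧
  (∀ i, ∀ s ∈ I, HasDerivAt (Y i)
      (Y i s * (∑ j, (d j : ℝ) * X j s ^ 2 - ε / 2 * L s ^ 2 - X i s)) s)

/-!
The quotient `(Xᵢ - k 𝓛²) / 𝓛⁴`, where `k = ε / 2`, solves a scalar linear equation `W' = b - a W`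
with `a → 1` and `b → k² (μᵢ σᵢ² + 1)`. Since the decay rate is eventually bounded below by a
positive constant, Grönwall's inequality makes the solution forget its initial value and follow
the equilibrium `b / a`.
-/

section LinearODE

variable {E : Type*} [NormedAddCommGroup E] [NormedSpace ℝ E]

-- For `0 < h` with `c * h ≤ 1`, write `f (x + h) = (1 - c * h) • f x + h • (slope f + c • f x)` and
-- take norms; this keeps the sign of `-c`, which `‖f'‖` would lose.
lemma eventually_right_slope_norm_lt_of_hasDerivWithinAt_sub_smul {f : ℝ → E} {g : E} {c x r : ℝ}
    (hf : HasDerivWithinAt f (g - c • f x) (Set.Ici x) x) (hr : ‖g‖ - c * ‖f x‖ < r) :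
    ∀ᶠ z in 𝓝[>] x, (z - x)⁻¹ * (‖f z‖ - ‖f x‖) < r := by
  have hslope : Tendsto (fun z => ‖slope f x z + c • f x‖) (𝓝[>] x) (𝓝 ‖g‖) := by
    have h := (hasDerivWithinAt_iff_tendsto_slope' Set.self_notMem_Ioi).1 hf.Ioi_of_Ici
    simpa only [sub_add_cancel] using (h.add_const (c • f x)).norm
  have hstep : ∀ᶠ z in 𝓝[>] x, c * (z - x) ≤ 1 := by
    have h : Tendsto (fun z => c * (z - x)) (𝓝[>] x) (𝓝 0) :=
      (Continuous.tendsto' (by fun_prop) x 0 (by simp)).mono_left nhdsWithin_le_nhds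
    exact h.eventually_le_const one_pos
  filter_upwards [hslope.eventually_lt_const (lt_add_of_sub_right_lt hr), hstep,
    self_mem_nhdsWithin] with z hz hcz hxz
  have hpos : 0 < z - x := sub_pos.2 hxz
  have hdecomp : f z = (1 - c * (z - x)) • f x + (z - x) • (slope f x z + c • f x) := by
    rw [smul_add, sub_smul_slope, vsub_eq_sub]
    module
  have hnorm : ‖f z‖ ≤ (1 - c * (z - x)) * ‖f x‖ + (z - x) * ‖slope f x z + c • f x‖ := by
    calc ‖f z‖ ≤ ‖(1 - c * (z - x)) • f x‖ + ‖(z - x) • (slope f x z + c • f x)‖ :=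
          hdecomp ▸ norm_add_le _ _
      _ = _ := by
          rw [norm_smul_of_nonneg (sub_nonneg.2 hcz), norm_smul_of_nonneg hpos.le]
  rw [inv_mul_lt_iff₀ hpos]
  calc ‖f z‖ - ‖f x‖ ≤ (z - x) * (‖slope f x z + c • f x‖ - c * ‖f x‖) := by linarith
    _ < (z - x) * r := mul_lt_mul_of_pos_left (by linarith) hpos

lemma norm_le_gronwallBound_neg_of_hasDerivWithinAt_sub_smul {f g : ℝ → E} {c : ℝ → ℝ} {κ δ a b : ℝ}
    (hcont : ContinuousOn f (Set.Icc a b))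
    (hderiv : ∀ x ∈ Set.Ico a b, HasDerivWithinAt f (g x - c x • f x) (Set.Ici x) x)
    (hc : ∀ x ∈ Set.Ico a b, κ ≤ c x) (hg : ∀ x ∈ Set.Ico a b, ‖g x‖ ≤ δ) :
    ∀ x ∈ Set.Icc a b, ‖f x‖ ≤ gronwallBound ‖f a‖ (-κ) δ (x - a) := by
  refine le_gronwallBound_of_liminf_deriv_right_le hcont.norm
    (fun x hx r hr => (eventually_right_slope_norm_lt_of_hasDerivWithinAt_sub_smul
      (hderiv x hx) hr).frequently) le_rfl fun x hx => ?_
  have hcx := mul_le_mul_of_nonneg_right (hc x hx) (norm_nonneg (f x))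
  linarith [hg x hx]

lemma tendsto_gronwallBound_neg_atTop {κ : ℝ} (hκ : 0 < κ) (δ ε : ℝ) :
    Tendsto (gronwallBound δ (-κ) ε) atTop (𝓝 (ε / κ)) := by
  rw [gronwallBound_of_K_ne_0 (neg_ne_zero.2 hκ.ne')]
  have hexp : Tendsto (fun x => Real.exp (-κ * x)) atTop (𝓝 0) :=
    Real.tendsto_exp_atBot.comp (tendsto_id.const_mul_atTop_of_neg (neg_neg_of_pos hκ))
  have h := (hexp.const_mul δ).add ((hexp.sub_const 1).const_mul (ε / -κ))
  convert h using 2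
  field_simp
  ring

lemma tendsto_zero_of_hasDerivAt_sub_smul {f g : ℝ → E} {c : ℝ → ℝ} {κ : ℝ}
    (hf : ∀ᶠ s in atTop, HasDerivAt f (g s - c s • f s) s)
    (hκ : 0 < κ) (hc : ∀ᶠ s in atTop, κ ≤ c s) (hg : Tendsto g atTop (𝓝 0)) :
    Tendsto f atTop (𝓝 0) := by
  rw [tendsto_zero_iff_norm_tendsto_zero]
  refine tendsto_order.2 ⟨fun η hη => .of_forall fun s => hη.trans_le (norm_nonneg _),
    fun η hη => ?_⟩
  obtain ⟨δ, hδ, hδη⟩ : ∃ δ, 0 < δ ∧ δ / κ < η :=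
    ⟨κ * η / 2, by positivity, by field_simp; linarith⟩
  have hgδ : ∀ᶠ s in atTop, ‖g s‖ ≤ δ := hg.norm.eventually_le_const (by simpa using hδ)
  obtain ⟨T, hT⟩ := eventually_atTop.1 (hf.and (hc.and hgδ))
  have hbound : ∀ s ≥ T, ‖f s‖ ≤ gronwallBound ‖f T‖ (-κ) δ (s - T) := fun s hs =>
    norm_le_gronwallBound_neg_of_hasDerivWithinAt_sub_smul
      (fun x hx => (hT x hx.1).1.continuousAt.continuousWithinAt)
      (fun x hx => (hT x hx.1).1.hasDerivWithinAt)
      (fun x hx => (hT x hx.1).2.1) (fun x hx => (hT x hx.1).2.2) s ⟨hs, le_rfl⟩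
  have hlim : Tendsto (fun s => gronwallBound ‖f T‖ (-κ) δ (s - T)) atTop (𝓝 (δ / κ)) :=
    (tendsto_gronwallBound_neg_atTop hκ _ _).comp (tendsto_atTop_add_const_right _ _ tendsto_id)
  filter_upwards [hlim.eventually_lt_const hδη, eventually_ge_atTop T] with s hs hTs
  exact (hbound s hTs).trans_lt hs

lemma tendsto_of_hasDerivAt_sub_smul {f g : ℝ → E} {c : ℝ → ℝ} {α : ℝ} {l : E}
    (hf : ∀ᶠ s in atTop, HasDerivAt f (g s - c s • f s) s)
    (hα : 0 < α) (hc : Tendsto c atTop (𝓝 α)) (hg : Tendsto g atTop (𝓝 (α • l))) :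
    Tendsto f atTop (𝓝 l) := by
  rw [← tendsto_sub_nhds_zero_iff]
  have hgc : Tendsto (fun s => g s - c s • l) atTop (𝓝 0) := by
    simpa only [sub_self] using hg.sub (hc.smul_const l)
  refine tendsto_zero_of_hasDerivAt_sub_smul (hf.mono fun s hs => ?_) (half_pos hα)
    (hc.eventually_const_le (half_lt_self hα)) hgc
  exact (hs.sub_const l).congr_deriv (by module)

end LinearODE

section SolitonQuotient

variable {L x φ q : ℝ → ℝ} {k : ℝ}

lemma hasDerivAt_sub_mul_sq_div_pow_four {s : ℝ} (hL0 : L s ≠ 0)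
    (hL : HasDerivAt L (L s * φ s) s)
    (hx : HasDerivAt x (x s * (φ s - 1) + q s + k * L s ^ 2) s) :
    HasDerivAt (fun t => (x t - k * L t ^ 2) / L t ^ 4)
      (q s / L s ^ 4 - k * (φ s / L s ^ 2)
        - (1 + 3 * φ s) * ((x s - k * L s ^ 2) / L s ^ 4)) s := by
  refine ((hx.fun_sub ((hL.fun_pow 2).const_mul k)).fun_div (hL.fun_pow 4)
    (pow_ne_zero 4 hL0)).congr_deriv ?_
  push_cast
  field_simp
  ring

lemma tendsto_sub_mul_sq_div_pow_four {m p : ℝ}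
    (hL0 : ∀ᶠ s in atTop, L s ≠ 0)
    (hL : ∀ᶠ s in atTop, HasDerivAt L (L s * φ s) s)
    (hx : ∀ᶠ s in atTop, HasDerivAt x (x s * (φ s - 1) + q s + k * L s ^ 2) s)
    (hLlim : Tendsto L atTop (𝓝 0))
    (hφ : Tendsto (fun s => φ s / L s ^ 2) atTop (𝓝 m))
    (hq : Tendsto (fun s => q s / L s ^ 4) atTop (𝓝 p)) :
    Tendsto (fun s => (x s - k * L s ^ 2) / L s ^ 4) atTop (𝓝 (p - k * m)) := by
  have hφ0 : Tendsto φ atTop (𝓝 0) := by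
    have h : Tendsto (fun s => φ s / L s ^ 2 * L s ^ 2) atTop (𝓝 0) := by
      simpa using hφ.mul (hLlim.pow 2)
    exact h.congr' (hL0.mono fun s hs => div_mul_cancel₀ _ (pow_ne_zero 2 hs))
  have hrate : Tendsto (fun s => 1 + 3 * φ s) atTop (𝓝 1) := by
    simpa using (hφ0.const_mul 3).const_add 1
  refine tendsto_of_hasDerivAt_sub_smul ?_ one_pos hrate
    (by simpa only [one_smul] using hq.sub (hφ.const_mul k))
  filter_upwards [hL0, hL, hx] with s hs hLs hxs
  exact hasDerivAt_sub_mul_sq_div_pow_four hs hLs hxs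

end SolitonQuotient

lemma tendsto_sum_mul_sq_div_sq {ι α : Type*} [Fintype ι] {l : Filter α} (w : ι → ℝ)
    {u : ι → α → ℝ} {v : α → ℝ} (h : ∀ j, Tendsto (fun a => u j a / v a) l (𝓝 0)) :
    Tendsto (fun a => (∑ j, w j * u j a ^ 2) / v a ^ 2) l (𝓝 0) := by
  have hsum := tendsto_finsetSum Finset.univ fun j _ => ((h j).pow 2).const_mul (w j)
  simpa [Finset.sum_div, div_pow, mul_div_assoc] using hsum

theorem stmt_15_general {r : ℕ} {d : Fin r → ℕ} {μ : Fin r → ℝ} {ε s₀ : ℝ}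
    {L : ℝ → ℝ} {X Y : Fin r → ℝ → ℝ}
    (hsol : IsSolitonSol r d μ ε L X Y (Set.Ici s₀))
    (hL0 : ∀ᶠ s in atTop, L s ≠ 0) (i : Fin r) {σ : ℝ}
    (hLlim : Tendsto L atTop (𝓝 0))
    (hXLlim : ∀ j, Tendsto (fun s => X j s / L s) atTop (𝓝 0))
    (hYlim : Tendsto (fun s => Y i s / L s ^ 2) atTop (𝓝 (ε / 2 * σ))) :
    Tendsto (fun s => (X i s - ε / 2 * L s ^ 2) / L s ^ 4) atTop
      (𝓝 ((ε / 2) ^ 2 * (μ i * σ ^ 2 + 1))) := by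
  obtain ⟨hL, hX, -⟩ := hsol
  have hφ : Tendsto (fun s => (∑ j, (d j : ℝ) * X j s ^ 2 - ε / 2 * L s ^ 2) / L s ^ 2) atTop
      (𝓝 (-(ε / 2))) := by
    have h := (tendsto_sum_mul_sq_div_sq (fun j => (d j : ℝ)) hXLlim).sub_const (ε / 2)
    rw [zero_sub] at h
    refine h.congr' (hL0.mono fun s hs => ?_)
    field_simp
  have hq : Tendsto (fun s => μ i * Y i s ^ 2 / L s ^ 4) atTop
      (𝓝 (μ i * (ε / 2 * σ) ^ 2)) :=
    ((hYlim.pow 2).const_mul (μ i)).congr fun s => by ring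
  have hlim := tendsto_sub_mul_sq_div_pow_four hL0 ((eventually_ge_atTop s₀).mono hL)
    ((eventually_ge_atTop s₀).mono (hX i)) hLlim hφ hq
  convert hlim using 2
  ring

/-- Refined asymptotics of Lemma 5.4: if `μᵢ ≥ 0` for all `i`, `𝓛 → 0`,
`Xⱼ → 0`, `Xⱼ/𝓛 → 0` for all `j`, and `Yᵢ/𝓛² → (ε/2)σᵢ` with `σᵢ > 0`, then
`(Xᵢ − (ε/2)𝓛²)/𝓛⁴ → (ε/2)²(μᵢσᵢ² + 1)`. -/
theorem stmt_15 (r : ℕ) (hr : 1 ≤ r) (d : Fin r → ℕ) (hd : ∀ i, 0 < d i)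
    (μ : Fin r → ℝ) (hμ : ∀ i, 0 ≤ μ i) (ε : ℝ) (hε : 0 < ε) (s₀ : ℝ)
    (L : ℝ → ℝ) (X Y : Fin r → ℝ → ℝ)
    (hsol : IsSolitonSol r d μ ε L X Y (Set.Ici s₀))
    (hL : ∀ s ≥ s₀, 0 < L s)
    (i : Fin r) (σi : ℝ) (hσi : 0 < σi)
    (hLlim : Tendsto L atTop (𝓝 0))
    (hXlim : ∀ j, Tendsto (X j) atTop (𝓝 0))
    (hXLlim : ∀ j, Tendsto (fun s => X j s / L s) atTop (𝓝 0))
    (hYlim : Tendsto (fun s => Y i s / L s ^ 2) atTop (𝓝 (ε / 2 * σi))) :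
    Tendsto (fun s => (X i s - ε / 2 * L s ^ 2) / L s ^ 4) atTop
      (𝓝 ((ε / 2) ^ 2 * (μ i * σi ^ 2 + 1))) := by
  exact stmt_15_general hsol ((eventually_ge_atTop s₀).mono fun s hs => (hL s hs).ne') i hLlim
    hXLlim hYlim
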